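/- Deligne's observation: Let d : H → H be a k-linear map with d(H^m) ⊆ H^{m-1} for all m which commutes with the Lefschetz operator, i.e. d∘L = L∘d. Then d = 0. -/

import Mathlib

/-- **Deligne's observation.**
Let `H = ⊕ₘ Hᵐ` be a graded `k`-vector space (each piece finite dimensional,
concentrated in degrees `0 ≤ m ≤ 2n`), and let `L` be a Lefschetz operator of degree `+2`
satisfying hard Lefschetz. If `d : H → H` is a `k`-linear map of degree `-1`
(`d(Hᵐ) ⊆ H^{m-1}`) commuting with `L`, then `d = 0`. -/
theorem deligne_observation
    (k V : Type*) [Field k] [AddCommGroup V] [Module k V]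
    (n : ℕ) (H : ℤ → Submodule k V)
    (hfin : ∀ m : ℤ, FiniteDimensional k (H m))
    (hbound : ∀ m : ℤ, ¬(0 ≤ m ∧ m ≤ 2 * (n : ℤ)) → H m = ⊥)
    (hinternal : DirectSum.IsInternal H)
    (L : V →ₗ[k] V)
    (hL : ∀ m : ℤ, (H m).map L ≤ H (m + 2))
    (hHLsurj : ∀ i : ℕ, i ≤ n → (H ((n : ℤ) - i)).map (L ^ i) = H ((n : ℤ) + i))
    (hHLinj : ∀ i : ℕ, i ≤ n → ∀ x ∈ H ((n : ℤ) - i), (L ^ i) x = 0 → x = 0)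
    (d : V →ₗ[k] V)
    (hd : ∀ m : ℤ, (H m).map d ≤ H (m - 1))
    (hcomm : d ∘ₗ L = L ∘ₗ d) :
    d = 0 := by
  have inj : ∀ i : ℕ, ∀ x ∈ H ((n : ℤ) - i), (L ^ i) x = 0 → x = 0 := by
    intro i x hx h
    by_cases hi : i ≤ n
    · exact hHLinj i hi x hx h
    · rw [hbound _ (by omega)] at hx
      simpa using hx
  have surj : ∀ i : ℕ, ∀ x ∈ H ((n : ℤ) + i), ∃ y ∈ H ((n : ℤ) - i), (L ^ i) y = x := by
    intro i x hx
    by_cases hi : i ≤ n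
    · rw [← hHLsurj i hi] at hx
      exact hx
    · rw [hbound _ (by omega)] at hx
      refine ⟨0, Submodule.zero_mem _, ?_⟩
      rw [(Submodule.mem_bot k).1 hx, map_zero]
  have hpow : ∀ (i : ℕ) (m : ℤ), ∀ x ∈ H m, (L ^ i) x ∈ H (m + 2 * i) := by
    intro i
    induction i with
    | zero => intro m x hx; simpa using hx
    | succ i ih =>
      intro m x hx
      have h := hL _ (Submodule.mem_map_of_mem (ih m x hx))
      rw [pow_succ', Module.End.mul_apply]
      have e : m + 2 * ((i + 1 : ℕ) : ℤ) = m + 2 * i + 2 := by push_cast; ring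
      rw [e]
      exact h
  have hc : ∀ (i : ℕ) (x : V), d ((L ^ i) x) = (L ^ i) (d x) := by
    intro i
    induction i with
    | zero => intro x; simp
    | succ i ih =>
      intro x
      rw [pow_succ', Module.End.mul_apply, Module.End.mul_apply, ← ih]
      exact LinearMap.congr_fun hcomm _
  have low : ∀ (j i : ℕ), n < i + j → ∀ x ∈ H ((n : ℤ) - i), d x = 0 := by
    intro j
    induction j with
    | zero =>
      intro i hi x hx
      rw [hbound _ (by omega)] at hx
      rw [(Submodule.mem_bot k).1 hx, map_zero]
    | succ j ih =>
      intro i hi x hx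
      have h1 := hpow (i + 1) _ x hx
      have e : (n : ℤ) - i + 2 * ((i + 1 : ℕ) : ℤ) = n + ((i + 2 : ℕ) : ℤ) := by
        push_cast; ring
      rw [e] at h1
      obtain ⟨y, hy, hyx⟩ := surj (i + 2) _ h1
      have hdy := ih (i + 2) (by omega) y hy
      have hdx := hd _ (Submodule.mem_map_of_mem hx)
      have e2 : (n : ℤ) - i - 1 = n - ((i + 1 : ℕ) : ℤ) := by push_cast; ring
      rw [e2] at hdx
      refine inj (i + 1) _ hdx ?_
      rw [← hc, ← hyx, hc, hdy, map_zero]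
  have all : ∀ m : ℤ, H m ≤ LinearMap.ker d := by
    intro m x hx
    rw [LinearMap.mem_ker]
    rcases le_total m n with h | h
    · obtain ⟨i, hi⟩ := Int.eq_ofNat_of_zero_le (sub_nonneg.2 h)
      obtain rfl : m = n - (i : ℤ) := by omega
      exact low (n + 1) i (by omega) x hx
    · obtain ⟨i, hi⟩ := Int.eq_ofNat_of_zero_le (sub_nonneg.2 h)
      obtain rfl : m = n + (i : ℤ) := by omega
      obtain ⟨y, hy, rfl⟩ := surj i x hx
      rw [hc, low (n + 1) i (by omega) y hy, map_zero]
  rw [← LinearMap.ker_eq_top, eq_top_iff, ← hinternal.submodule_iSup_eq_top]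
  exact iSup_le all
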